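/- Let Ω ⊆ ℝ³ be open and let S : ℝ³ → ℝ^{3×3} be a twice continuously differentiable matrix field on Ω that is symmetric at every point, S(x)ᵀ = S(x). Define the matrix field J S as follows: first replace each row of S by its curl (so the intermediate field R has rows Rᵢ = curl(Sᵢ), where Sᵢ denotes the i-th row of S viewed as a vector field), and then replace each column of R by its curl. Then the resulting matrix field J S is symmetric at every point of Ω. -/

import Mathlib

open Matrix
/-- The `i`-th partial derivative of a scalar function on `ℝ³`. -/
noncomputable def pd (i : Fin 3) (f : (Fin 3 → ℝ) → ℝ) (x : Fin 3 → ℝ) : ℝ :=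
  fderiv ℝ f x (Pi.single i 1)

/-- The curl of a vector field on `ℝ³`. -/
noncomputable def curl (F : (Fin 3 → ℝ) → Fin 3 → ℝ) (x : Fin 3 → ℝ) : Fin 3 → ℝ :=
  ![pd 1 (fun y => F y 2) x - pd 2 (fun y => F y 1) x,
    pd 2 (fun y => F y 0) x - pd 0 (fun y => F y 2) x,
    pd 0 (fun y => F y 1) x - pd 1 (fun y => F y 0) x]

/-- `rowCurl S` : the matrix field obtained by replacing each row of `S` by its curl. -/
noncomputable def rowCurl (S : (Fin 3 → ℝ) → Matrix (Fin 3) (Fin 3) ℝ)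
    (x : Fin 3 → ℝ) : Matrix (Fin 3) (Fin 3) ℝ :=
  Matrix.of fun i j => curl (fun y => S y i) x j

/-- The second-order operator `J` of the elasticity complex: take the curl of each
row, then the curl of each column. -/
noncomputable def Jop (S : (Fin 3 → ℝ) → Matrix (Fin 3) (Fin 3) ℝ)
    (x : Fin 3 → ℝ) : Matrix (Fin 3) (Fin 3) ℝ :=
  Matrix.of fun i j => curl (fun y k => rowCurl S y k j) x i

/-!
With indices read modulo 3, `(curl F)ᵢ = ∂ᵢ₊₁ Fᵢ₊₂ - ∂ᵢ₊₂ Fᵢ₊₁`, so `(J S)ᵢⱼ` is a signed sum of the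
four terms `∂ₐ ∂_c S_bd` with `{a, b} = {i + 1, i + 2}` and `{c, d} = {j + 1, j + 2}`. Since second
partial derivatives commute, exchanging `i` and `j` amounts to transposing `S`, that is,
`(J S)ᵀ = J (Sᵀ)`. As `J` is local, `S` and `Sᵀ` may be identified when they agree near the point.
-/

open Filter Topology

section DirectionalDerivatives

variable {𝕜 E F : Type*} [NontriviallyNormedField 𝕜] [NormedAddCommGroup E] [NormedSpace 𝕜 E]
  [NormedAddCommGroup F] [NormedSpace 𝕜 F] {f : E → F} {x : E}

theorem fderiv_fderiv_apply (hf : DifferentiableAt 𝕜 (fderiv 𝕜 f) x) (v w : E) :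
    fderiv 𝕜 (fun y => fderiv 𝕜 f y v) x w = fderiv 𝕜 (fderiv 𝕜 f) x w v := by
  simp [fderiv_clm_apply hf (differentiableAt_const v)]

theorem fderiv_fderiv_apply_comm (hf : DifferentiableAt 𝕜 (fderiv 𝕜 f) x)
    (hsymm : IsSymmSndFDerivAt 𝕜 f x) (v w : E) :
    fderiv 𝕜 (fun y => fderiv 𝕜 f y v) x w = fderiv 𝕜 (fun y => fderiv 𝕜 f y w) x v := by
  rw [fderiv_fderiv_apply hf, fderiv_fderiv_apply hf, hsymm.eq]

theorem isSymmSndFDerivAt_of_eventually_differentiableAt [IsRCLikeNormedField 𝕜]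
    (hf : ∀ᶠ y in 𝓝 x, DifferentiableAt 𝕜 f y) (hf' : DifferentiableAt 𝕜 (fderiv 𝕜 f) x) :
    IsSymmSndFDerivAt 𝕜 f x :=
  second_derivative_symmetric_of_eventually (hf.mono fun _ hy => hy.hasFDerivAt) hf'.hasFDerivAt

end DirectionalDerivatives

section PartialDerivatives

variable {f g : (Fin 3 → ℝ) → ℝ} {x : Fin 3 → ℝ}

theorem differentiableAt_pd (hf : DifferentiableAt ℝ (fderiv ℝ f) x) (i : Fin 3) :
    DifferentiableAt ℝ (pd i f) x :=
  hf.clm_apply (differentiableAt_const _)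

theorem pd_sub (hf : DifferentiableAt ℝ f x) (hg : DifferentiableAt ℝ g x) (i : Fin 3) :
    pd i (fun y => f y - g y) x = pd i f x - pd i g x := by
  simp only [pd, fderiv_fun_sub hf hg, _root_.sub_apply]

theorem pd_comm (hf : DifferentiableAt ℝ (fderiv ℝ f) x) (hsymm : IsSymmSndFDerivAt ℝ f x)
    (i j : Fin 3) : pd i (pd j f) x = pd j (pd i f) x :=
  fderiv_fderiv_apply_comm hf hsymm _ _

theorem pd_congr_of_eventuallyEq (h : f =ᶠ[𝓝 x] g) (i : Fin 3) : pd i f =ᶠ[𝓝 x] pd i g :=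
  h.fderiv.fun_comp fun L => L (Pi.single i 1)

end PartialDerivatives

theorem curl_apply (F : (Fin 3 → ℝ) → Fin 3 → ℝ) (x : Fin 3 → ℝ) (i : Fin 3) :
    curl F x i = pd (i + 1) (fun y => F y (i + 2)) x - pd (i + 2) (fun y => F y (i + 1)) x := by
  fin_cases i <;> rfl

theorem curl_congr_of_eventuallyEq {F G : (Fin 3 → ℝ) → Fin 3 → ℝ} {x : Fin 3 → ℝ}
    (h : F =ᶠ[𝓝 x] G) : curl F =ᶠ[𝓝 x] curl G := by
  have hpd (i k : Fin 3) : pd i (fun y => F y k) =ᶠ[𝓝 x] pd i (fun y => G y k) :=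
    pd_congr_of_eventuallyEq (h.fun_comp fun v => v k) i
  filter_upwards [eventually_all.2 fun i => eventually_all.2 (hpd i)] with y hy
  ext i
  simp only [curl_apply, hy]

section MatrixFields

variable {S T : (Fin 3 → ℝ) → Matrix (Fin 3) (Fin 3) ℝ} {x : Fin 3 → ℝ}

theorem rowCurl_congr_of_eventuallyEq (h : S =ᶠ[𝓝 x] T) : rowCurl S =ᶠ[𝓝 x] rowCurl T := by
  have hrow (i : Fin 3) : curl (fun y => S y i) =ᶠ[𝓝 x] curl (fun y => T y i) :=
    curl_congr_of_eventuallyEq (h.fun_comp fun A => A i)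
  filter_upwards [eventually_all.2 hrow] with y hy
  ext i j
  exact congrFun (hy i) j

theorem Jop_congr_of_eventuallyEq (h : S =ᶠ[𝓝 x] T) : Jop S =ᶠ[𝓝 x] Jop T := by
  have hcol (j : Fin 3) :
      curl (fun y k => rowCurl S y k j) =ᶠ[𝓝 x] curl (fun y k => rowCurl T y k j) :=
    curl_congr_of_eventuallyEq ((rowCurl_congr_of_eventuallyEq h).fun_comp fun A k => A k j)
  filter_upwards [eventually_all.2 hcol] with y hy
  ext i j
  exact congrFun (hy j) i

theorem pd_rowCurl (hS : ∀ i j, DifferentiableAt ℝ (fderiv ℝ fun y => S y i j) x)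
    (a i j : Fin 3) :
    pd a (fun y => rowCurl S y i j) x =
      pd a (pd (j + 1) fun y => S y i (j + 2)) x - pd a (pd (j + 2) fun y => S y i (j + 1)) x := by
  simp only [rowCurl, of_apply, curl_apply]
  exact pd_sub (differentiableAt_pd (hS _ _) _) (differentiableAt_pd (hS _ _) _) a

theorem Jop_apply (hS : ∀ i j, DifferentiableAt ℝ (fderiv ℝ fun y => S y i j) x) (i j : Fin 3) :
    Jop S x i j =
      pd (i + 1) (pd (j + 1) fun y => S y (i + 2) (j + 2)) x
        - pd (i + 1) (pd (j + 2) fun y => S y (i + 2) (j + 1)) x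
        - (pd (i + 2) (pd (j + 1) fun y => S y (i + 1) (j + 2)) x
          - pd (i + 2) (pd (j + 2) fun y => S y (i + 1) (j + 1)) x) := by
  simp only [Jop, of_apply, curl_apply, pd_rowCurl hS]

theorem Jop_transpose (hS : ∀ i j, DifferentiableAt ℝ (fderiv ℝ fun y => S y i j) x)
    (hsymm : ∀ i j, IsSymmSndFDerivAt ℝ (fun y => S y i j) x) :
    Jop (fun y => (S y)ᵀ) x = (Jop S x)ᵀ := by
  have hcomm (a b i j : Fin 3) :
      pd a (pd b fun y => S y i j) x = pd b (pd a fun y => S y i j) x :=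
    pd_comm (hS i j) (hsymm i j) a b
  ext i j
  rw [transpose_apply, Jop_apply hS, Jop_apply (S := fun y => (S y)ᵀ) fun i j => hS j i]
  simp only [transpose_apply, hcomm (i + 1), hcomm (i + 2)]
  ring

end MatrixFields

theorem Jop_symm_of_symm_general
    (Ω : Set (Fin 3 → ℝ)) (hΩ : IsOpen Ω)
    (S : (Fin 3 → ℝ) → Matrix (Fin 3) (Fin 3) ℝ)
    (hS : ∀ i j, DifferentiableOn ℝ (fun x => S x i j) Ω)
    (hS' : ∀ i j, DifferentiableOn ℝ (fderiv ℝ fun x => S x i j) Ω)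
    (hsymm : ∀ x ∈ Ω, (S x)ᵀ = S x) :
    ∀ x ∈ Ω, (Jop S x)ᵀ = Jop S x := by
  intro x hx
  have hxΩ : Ω ∈ 𝓝 x := hΩ.mem_nhds hx
  have hdiff (i j : Fin 3) : DifferentiableAt ℝ (fderiv ℝ fun y => S y i j) x :=
    (hS' i j).differentiableAt hxΩ
  have hsnd (i j : Fin 3) : IsSymmSndFDerivAt ℝ (fun y => S y i j) x :=
    isSymmSndFDerivAt_of_eventually_differentiableAt
      ((hS i j).eventually_differentiableAt hxΩ) (hdiff i j)
  have hST : (fun y => (S y)ᵀ) =ᶠ[𝓝 x] S := eventually_of_mem hxΩ hsymm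
  calc (Jop S x)ᵀ = Jop (fun y => (S y)ᵀ) x := (Jop_transpose hdiff hsnd).symm
    _ = Jop S x := (Jop_congr_of_eventuallyEq hST).eq_of_nhds

/-- If `S` is a `C²` matrix field on an open set `Ω ⊆ ℝ³` which is symmetric at every
point, then `J S` is symmetric at every point of `Ω`. -/
theorem Jop_symm_of_symm
    (Ω : Set (Fin 3 → ℝ)) (hΩ : IsOpen Ω)
    (S : (Fin 3 → ℝ) → Matrix (Fin 3) (Fin 3) ℝ)
    (hS : ∀ i j, ContDiffOn ℝ 2 (fun x => S x i j) Ω)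
    (hsymm : ∀ x ∈ Ω, (S x)ᵀ = S x) :
    ∀ x ∈ Ω, (Jop S x)ᵀ = Jop S x :=
  Jop_symm_of_symm_general Ω hΩ S (fun i j => (hS i j).differentiableOn two_ne_zero)
    (fun i j => ((hS i j).fderiv_of_isOpen (m := 1) hΩ one_add_one_eq_two.le).differentiableOn
      one_ne_zero) hsymm
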